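/- Let n ≥ 1 and 1 ≤ k ≤ n. If A is a real symmetric n×n matrix with A ∈ Γ_k^+, then the Newton transform T_{k−1}(A) is positive definite: XᵀT_{k−1}(A)X > 0 for every nonzero X ∈ ℝ^n. -/

import Mathlib

open Matrix

/-- `σ_k(A)`: the k-th elementary symmetric function of the eigenvalues of `A`,
defined as `(−1)^k` times the coefficient of `X^(n−k)` in the characteristic polynomial. -/
noncomputable def sigmaMat {n : ℕ} (A : Matrix (Fin n) (Fin n) ℝ) (k : ℕ) : ℝ :=
  (-1 : ℝ) ^ k * A.charpoly.coeff (n - k)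

/-- The k-th Newton transform `T_k(A) = Σ_{j=0}^{k} (−1)^j σ_{k−j}(A) A^j`. -/
noncomputable def newtonT {n : ℕ} (A : Matrix (Fin n) (Fin n) ℝ) (k : ℕ) :
    Matrix (Fin n) (Fin n) ℝ :=
  ∑ j ∈ Finset.range (k + 1), ((-1 : ℝ) ^ j * sigmaMat A (k - j)) • A ^ j

/-- `A ∈ Γ_k^+` iff `σ_j(A) > 0` for all `1 ≤ j ≤ k`. -/
def GammaPlus {n : ℕ} (k : ℕ) (A : Matrix (Fin n) (Fin n) ℝ) : Prop :=
  ∀ j : ℕ, 1 ≤ j → j ≤ k → 0 < sigmaMat A j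

/-!
`T_k(A)` is a polynomial in `A`, whose value at an eigenvalue `a` telescopes to `σ_k` of the
remaining eigenvalues `s`, so it suffices to show `σ_k(s) > 0` when `σ_1, …, σ_{k+1}` are positive
at `a ::ₘ s`. The `σ_j(s)` are, up to reversing their order, the coefficients of the real-rooted
polynomial `∏ r ∈ s, (X + r)`. The Laguerre inequality `p * p'' ≤ p' ^ 2` at `0`, applied to its
derivatives, which are real-rooted by Rolle's theorem, makes the sequence `σ_j(s)` log-concave.
Now argue by induction on `k`: if `σ_{k-1}(s) > 0` but `σ_k(s) ≤ 0`, then the positivity of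
`σ_k(s) + a * σ_{k-1}(s)` and `σ_{k+1}(s) + a * σ_k(s)` contradicts log-concavity.
-/

section RealRooted

open Polynomial

theorem laguerre_inequality {R : Type*} [CommRing R] [LinearOrder R] [IsStrictOrderedRing R]
    {p : R[X]} (hp : p.Splits) (x : R) :
    p.eval x * p.derivative.derivative.eval x ≤ p.derivative.eval x ^ 2 := by
  induction hp using Submonoid.closure_induction with
  | mem p hp => rcases hp with ⟨a, rfl⟩ | ⟨a, rfl⟩ <;> simp
  | one => simp
  | mul p q _ _ hp hq =>
    simp only [derivative_mul, derivative_add, eval_add, eval_mul]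
    -- The defect `p' ^ 2 - p * p''` of `p * q` is `q ^ 2` times that of `p` plus `p ^ 2` times
    -- that of `q`.
    linear_combination q.eval x ^ 2 * hp + p.eval x ^ 2 * hq

theorem splits_derivative {p : ℝ[X]} (hp : p.Splits) : p.derivative.Splits := by
  refine splits_iff_card_roots.mpr (le_antisymm (card_roots' _) ?_)
  have hrolle := card_roots_le_derivative p
  have hdeg := natDegree_derivative_le p
  rw [← hp.natDegree_eq_card_roots] at hrolle
  omega

theorem splits_iterate_derivative {p : ℝ[X]} (hp : p.Splits) (m : ℕ) :
    (derivative^[m] p).Splits :=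
  Function.Iterate.rec (Splits ·) hp (fun _ => splits_derivative) m

theorem eval_zero_iterate_derivative {R : Type*} [Semiring R] (p : R[X]) (m : ℕ) :
    (derivative^[m] p).eval 0 = m.factorial * p.coeff m := by
  rw [← coeff_zero_eq_eval_zero, coeff_iterate_derivative, zero_add, Nat.descFactorial_self,
    nsmul_eq_mul]

theorem add_two_mul_coeff_mul_coeff_le_of_splits {p : ℝ[X]} (hp : p.Splits) (m : ℕ) :
    (m + 2) * (p.coeff m * p.coeff (m + 2)) ≤ (m + 1) * p.coeff (m + 1) ^ 2 := by
  have h := laguerre_inequality (splits_iterate_derivative hp m) 0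
  simp only [← Function.iterate_succ_apply', eval_zero_iterate_derivative, Nat.factorial_succ] at h
  push_cast at h
  have hpos : (0 : ℝ) < m.factorial ^ 2 * (m + 1) := by positivity
  refine le_of_mul_le_mul_left ?_ hpos
  linear_combination h

theorem coeff_mul_coeff_le_sq_of_splits {p : ℝ[X]} (hp : p.Splits) (m : ℕ) :
    p.coeff m * p.coeff (m + 2) ≤ p.coeff (m + 1) ^ 2 := by
  rcases le_total (p.coeff m * p.coeff (m + 2)) 0 with hnonpos | hnonneg
  · exact hnonpos.trans (sq_nonneg _)
  · have hm : (0 : ℝ) < m + 1 := by positivity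
    refine le_of_mul_le_mul_left ?_ hm
    linear_combination add_two_mul_coeff_mul_coeff_le_of_splits hp m + hnonneg

end RealRooted

section ElementarySymmetric

open Polynomial

theorem esymm_eq_zero_of_card_lt {R : Type*} [CommSemiring R] {s : Multiset R} {k : ℕ}
    (h : s.card < k) : s.esymm k = 0 := by
  simp [Multiset.esymm, Multiset.powersetCard_eq_empty k h]

theorem esymm_zero {R : Type*} [CommSemiring R] (s : Multiset R) : s.esymm 0 = 1 := by
  simp [Multiset.esymm]

theorem esymm_cons_succ {R : Type*} [CommSemiring R] (a : R) (s : Multiset R) (k : ℕ) :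
    (a ::ₘ s).esymm (k + 1) = s.esymm (k + 1) + a * s.esymm k := by
  simp [Multiset.esymm, Multiset.powersetCard_cons, Multiset.sum_map_mul_left]

theorem esymm_mul_esymm_le_sq (s : Multiset ℝ) (k : ℕ) :
    s.esymm k * s.esymm (k + 2) ≤ s.esymm (k + 1) ^ 2 := by
  rcases lt_or_ge s.card (k + 2) with hlt | hle
  · rw [esymm_eq_zero_of_card_lt hlt, mul_zero]
    positivity
  · obtain ⟨m, hm⟩ := Nat.exists_eq_add_of_le hle
    have hsplits : (s.map fun r => X + C r).prod.Splits :=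
      Splits.multisetProd (by simp +contextual)
    have h := coeff_mul_coeff_le_sq_of_splits hsplits m
    rw [s.prod_X_add_C_coeff (by omega), s.prod_X_add_C_coeff (by omega),
      s.prod_X_add_C_coeff (by omega), hm] at h
    rw [show k + 2 + m - m = k + 2 by omega, show k + 2 + m - (m + 1) = k + 1 by omega,
      show k + 2 + m - (m + 2) = k by omega] at h
    rwa [mul_comm]

theorem esymm_pos_of_esymm_cons_pos {s : Multiset ℝ} {a : ℝ} {k : ℕ}
    (h : ∀ j, 1 ≤ j → j ≤ k + 1 → 0 < (a ::ₘ s).esymm j) : 0 < s.esymm k := by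
  induction k with
  | zero => simp [esymm_zero]
  | succ k ih =>
    have hk : 0 < s.esymm k := ih fun j hj hjk => h j hj (by omega)
    have h₁ : 0 < s.esymm (k + 1) + a * s.esymm k :=
      esymm_cons_succ a s k ▸ h (k + 1) (by omega) (by omega)
    have h₂ : 0 < s.esymm (k + 2) + a * s.esymm (k + 1) :=
      esymm_cons_succ a s (k + 1) ▸ h (k + 2) (by omega) le_rfl
    by_contra! hnonpos
    refine (esymm_mul_esymm_le_sq s k).not_gt ?_
    calc s.esymm (k + 1) ^ 2
        ≤ -(a * s.esymm k) * s.esymm (k + 1) := by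
          linear_combination mul_nonpos_of_nonneg_of_nonpos h₁.le hnonpos
      _ < s.esymm k * s.esymm (k + 2) := by linear_combination mul_pos hk h₂

/-- The polynomial `∑ j ≤ k, (-1) ^ j * σ_{k-j}(s) * X ^ j`, whose value at a matrix with
eigenvalues `s` is the `k`-th Newton transform. -/
noncomputable def newtonPolynomial {R : Type*} [CommRing R] (s : Multiset R) (k : ℕ) : R[X] :=
  ∑ j ∈ Finset.range (k + 1), C ((-1) ^ j * s.esymm (k - j)) * X ^ j

theorem newtonPolynomial_succ {R : Type*} [CommRing R] (s : Multiset R) (k : ℕ) :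
    newtonPolynomial s (k + 1) = C (s.esymm (k + 1)) - X * newtonPolynomial s k := by
  rw [newtonPolynomial, Finset.sum_range_succ', newtonPolynomial, Finset.mul_sum,
    sub_eq_add_neg, ← Finset.sum_neg_distrib, add_comm]
  congr 1
  · simp
  · refine Finset.sum_congr rfl fun j _ => ?_
    rw [Nat.add_sub_add_right]
    simp only [pow_succ, map_mul, map_neg, map_one]
    ring

theorem eval_newtonPolynomial_cons {R : Type*} [CommRing R] (a : R) (s : Multiset R) (k : ℕ) :
    (newtonPolynomial (a ::ₘ s) k).eval a = s.esymm k := by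
  induction k with
  | zero => simp [newtonPolynomial, esymm_zero]
  | succ k ih =>
    rw [newtonPolynomial_succ, eval_sub, eval_C, eval_mul, eval_X, ih, esymm_cons_succ]
    ring

theorem eval_newtonPolynomial_pos {s : Multiset ℝ} {a : ℝ} (ha : a ∈ s) {k : ℕ}
    (h : ∀ j, 1 ≤ j → j ≤ k + 1 → 0 < s.esymm j) : 0 < (newtonPolynomial s k).eval a := by
  obtain ⟨t, rfl⟩ := Multiset.exists_cons_of_mem ha
  rw [eval_newtonPolynomial_cons]
  exact esymm_pos_of_esymm_cons_pos h

end ElementarySymmetric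

section NewtonTransform

open Polynomial

open ComplexOrder in
theorem posDef_aeval_iff {ι 𝕜 : Type*} [Fintype ι] [DecidableEq ι] [RCLike 𝕜]
    {A : Matrix ι ι 𝕜} (hA : A.IsHermitian) (p : ℝ[X]) :
    (aeval A p).PosDef ↔ ∀ x ∈ spectrum ℝ A, 0 < p.eval x := by
  rw [← cfc_polynomial p A hA.isSelfAdjoint, hA.cfc_eq, IsHermitian.cfc,
    Unitary.conjStarAlgAut_apply, (Unitary.isUnit_coe).posDef_star_right_conjugate_iff,
    posDef_diagonal_iff, hA.spectrum_real_eq_range_eigenvalues]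
  simp

variable {n : ℕ} {A : Matrix (Fin n) (Fin n) ℝ}

theorem sigmaMat_eq_esymm_roots (hA : A.charpoly.Splits) {k : ℕ} (hk : k ≤ n) :
    sigmaMat A k = A.charpoly.roots.esymm k := by
  have hdeg : A.charpoly.natDegree = n := by simp
  rw [sigmaMat, coeff_eq_esymm_roots_of_splits hA (by omega), A.charpoly_monic.leadingCoeff, hdeg,
    Nat.sub_sub_self hk, one_mul, ← mul_assoc, ← mul_pow]
  simp

theorem newtonT_eq_aeval (hA : A.charpoly.Splits) {k : ℕ} (hk : k ≤ n) :
    newtonT A k = aeval A (newtonPolynomial A.charpoly.roots k) := by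
  rw [newtonT, newtonPolynomial, map_sum]
  refine Finset.sum_congr rfl fun j _ => ?_
  rw [sigmaMat_eq_esymm_roots hA (by omega), ← smul_eq_C_mul, map_smul, map_pow, aeval_X]

end NewtonTransform

/-- if `A ∈ Γ_k^+` then `T_{k−1}(A)` is positive definite. -/
theorem newton_pos_def (n k : ℕ) (hn : 1 ≤ n) (hk1 : 1 ≤ k) (hkn : k ≤ n)
    (A : Matrix (Fin n) (Fin n) ℝ) (hA : A.IsSymm) (hAG : GammaPlus k A) :
    ∀ X : Fin n → ℝ, X ≠ 0 → 0 < X ⬝ᵥ (newtonT A (k - 1)).mulVec X := by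
  intro X hX
  obtain ⟨k, rfl⟩ := Nat.exists_eq_add_of_le' hk1
  have hH : A.IsHermitian := by rwa [IsHermitian, conjTranspose_eq_transpose_of_trivial]
  have hsplits : A.charpoly.Splits := hH.splits_charpoly
  have hpos : ∀ j, 1 ≤ j → j ≤ k + 1 → 0 < A.charpoly.roots.esymm j := fun j hj hjk =>
    sigmaMat_eq_esymm_roots hsplits (hjk.trans hkn) ▸ hAG j hj hjk
  have hT : (newtonT A k).PosDef := by
    rw [newtonT_eq_aeval hsplits (by omega), posDef_aeval_iff hH]
    intro a ha
    have ha : a ∈ A.charpoly.roots := by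
      rwa [Polynomial.mem_roots A.charpoly_monic.ne_zero, ← mem_spectrum_iff_isRoot_charpoly]
    exact eval_newtonPolynomial_pos ha hpos
  simpa using hT.dotProduct_mulVec_pos hX
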